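/- Let x = (x₁, …, xₙ) ∈ ℝⁿ and t ∈ ℝ, and let L_t be the subspace of ℝ^{n+m} spanned by the vectors cos(t xᵢ) eᵢ − sin(t xᵢ) e_{n+i} for 1 ≤ i ≤ n. Let o^⊥ be the subspace spanned by e_{n+1}, …, e_{n+m}. Then L_t ∩ o^⊥ equals the span of {e_{n+i} : cos(t xᵢ) = 0}; in particular, if Σᵢ xᵢ² = 1, then L_t ∩ o^⊥ = {0} for all 0 ≤ t < π/(2 maxᵢ |xᵢ|), and for t̄₀ = π/(2 maxᵢ |xᵢ|) the dimension of L_{t̄₀} ∩ o^⊥ equals the number of indices i with |xᵢ| = maxⱼ |xⱼ|. -/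

import Mathlib

/-! An element of `L_t` is `∑ cᵢ (cos(t xᵢ) eᵢ - sin(t xᵢ) e_{n+i})`, and it lies in `o^⊥` exactly
when its `eᵢ`-coordinates `cᵢ cos(t xᵢ)` vanish. So `cᵢ ≠ 0` only where `cos(t xᵢ) = 0`, and what is
left is a combination of the corresponding `e_{n+i}`; conversely, where the cosine vanishes the sine
is `±1`, so that `e_{n+i}` is, up to sign, a generator of `L_t` (`span_inf_oPerp`).

With `M = maxᵢ |xᵢ| > 0`, the angles satisfy `|t xᵢ| ≤ t M < π/2` for `0 ≤ t < π/(2M)`, so no cosine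
vanishes there. At `t = π/(2M)` the angle `|t xᵢ|` lies in `[0, π/2]`, and its cosine vanishes iff
`|xᵢ| = M`; the dimension follows from the linear independence of the `e_{n+i}`. -/

open Matrix

noncomputable section

/-- The standard basis vector `eᵢ`, `1 ≤ i ≤ n`. -/
def eInl (n m : ℕ) (i : Fin n) : Fin n ⊕ Fin m → ℝ := Pi.single (Sum.inl i) 1

/-- The standard basis vector `e_{n+j}`, `1 ≤ j ≤ m`. -/
def eInr (n m : ℕ) (j : Fin m) : Fin n ⊕ Fin m → ℝ := Pi.single (Sum.inr j) 1

theorem span_inf_oPerp (n m : ℕ) (hnm : n ≤ m) (x : Fin n → ℝ) (t : ℝ) :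
    (Submodule.span ℝ (Set.range fun i : Fin n =>
      Real.cos (t * x i) • eInl n m i -
        Real.sin (t * x i) • eInr n m ⟨(i : ℕ), lt_of_lt_of_le i.isLt hnm⟩)) ⊓
      Submodule.span ℝ (Set.range fun j : Fin m => eInr n m j) =
    Submodule.span ℝ
      ((fun i : Fin n => eInr n m ⟨(i : ℕ), lt_of_lt_of_le i.isLt hnm⟩) ''
        {i | Real.cos (t * x i) = 0}) := by
  apply le_antisymm
  · rintro v ⟨h1, h2⟩
    obtain ⟨c, rfl⟩ := (Submodule.mem_span_range_iff_exists_fun ℝ).1 h1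
    obtain ⟨d, hd⟩ := (Submodule.mem_span_range_iff_exists_fun ℝ).1 h2
    -- The `eₖ`-coordinate of a combination of the `e_{n+j}` is zero.
    have key : ∀ k : Fin n, c k * Real.cos (t * x k) = 0 := by
      intro k
      have h := congrFun hd (Sum.inl k)
      simpa [eInl, eInr, Finset.sum_apply, Pi.single_apply, eq_comm] using h
    refine Submodule.sum_mem _ fun i _ => ?_
    rcases mul_eq_zero.1 (key i) with h | h
    · simp [h]
    · rw [h, zero_smul, zero_sub]
      exact Submodule.smul_mem _ _ (Submodule.neg_mem _ (Submodule.smul_mem _ _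
        (Submodule.subset_span ⟨i, h, rfl⟩)))
  · rw [Submodule.span_le]
    rintro _ ⟨i, hi, rfl⟩
    have hi : Real.cos (t * x i) = 0 := hi
    refine ⟨?_, Submodule.subset_span ⟨_, rfl⟩⟩
    have hs : Real.sin (t * x i) * Real.sin (t * x i) = 1 := by
      have := Real.sin_sq_add_cos_sq (t * x i)
      rw [hi] at this
      linarith
    -- `-sin(t xᵢ)` times the `i`-th generator is `sin² (t xᵢ) e_{n+i} = e_{n+i}`.
    have hmem := Submodule.smul_mem _ (-Real.sin (t * x i))
      (Submodule.subset_span (R := ℝ) (Set.mem_range_self (f := fun i : Fin n =>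
        Real.cos (t * x i) • eInl n m i -
          Real.sin (t * x i) • eInr n m ⟨(i : ℕ), lt_of_lt_of_le i.isLt hnm⟩) i))
    simpa [hi, smul_smul, hs] using hmem

theorem linearIndependent_eInr (n m : ℕ) (hnm : n ≤ m) :
    LinearIndependent ℝ
      (fun i : Fin n => eInr n m ⟨(i : ℕ), lt_of_lt_of_le i.isLt hnm⟩) := by
  have h := (Pi.basisFun ℝ (Fin n ⊕ Fin m)).linearIndependent.comp
    (fun i : Fin n => Sum.inr (⟨(i : ℕ), lt_of_lt_of_le i.isLt hnm⟩ : Fin m))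
    (fun a b hab => by simpa [Fin.ext_iff] using hab)
  convert h using 1
  ext i k
  simp [eInr]

theorem cos_mul_pos {M y t : ℝ} (hM : 0 < M) (hy : |y| ≤ M) (ht : 0 ≤ t)
    (htM : t < Real.pi / (2 * M)) : 0 < Real.cos (t * y) := by
  have h1 : t * (2 * M) < Real.pi := (lt_div_iff₀ (by positivity)).1 htM
  have h2 : |t * y| < Real.pi / 2 := by
    rw [abs_mul, abs_of_nonneg ht]
    nlinarith [mul_le_mul_of_nonneg_left hy ht]
  exact Real.cos_pos_of_mem_Ioo (abs_lt.1 h2)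

theorem cos_eq_zero_iff_abs_eq {M y : ℝ} (hM : 0 < M) (hy : |y| ≤ M) :
    Real.cos (Real.pi / (2 * M) * y) = 0 ↔ |y| = M := by
  have hp := Real.pi_pos
  have habs : |Real.pi / (2 * M) * y| = Real.pi / (2 * M) * |y| := by
    rw [abs_mul, abs_of_pos (by positivity)]
  rw [← Real.cos_abs, habs]
  constructor
  · intro h
    by_contra hne
    have hlt := lt_of_le_of_ne hy hne
    have h2 : Real.pi / (2 * M) * |y| < Real.pi / 2 := by
      calc Real.pi / (2 * M) * |y| < Real.pi / (2 * M) * M := by gcongr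
        _ = Real.pi / 2 := by field_simp
    have h0 : 0 ≤ Real.pi / (2 * M) * |y| := by positivity
    exact (Real.cos_pos_of_mem_Ioo ⟨by linarith, h2⟩).ne' h
  · intro h
    rw [h, show Real.pi / (2 * M) * M = Real.pi / 2 by field_simp, Real.cos_pi_div_two]

/-- `L_t ∩ o^⊥` is the span of the `e_{n+i}` with `cos(t xᵢ) = 0`; if `Σ xᵢ² = 1` then the
intersection is trivial for `0 ≤ t < t̄₀ = π/(2 max|xᵢ|)` and at `t̄₀` its dimension is the
number of indices attaining `max|xᵢ|`. -/
theorem stmt14 (n m : ℕ) (hn : 0 < n) (hnm : n ≤ m)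
    (x : Fin n → ℝ)
    (L : ℝ → Submodule ℝ (Fin n ⊕ Fin m → ℝ))
    (hL : ∀ t : ℝ, L t = Submodule.span ℝ (Set.range fun i : Fin n =>
      Real.cos (t * x i) • eInl n m i -
        Real.sin (t * x i) • eInr n m ⟨(i : ℕ), lt_of_lt_of_le i.isLt hnm⟩))
    (oPerp : Submodule ℝ (Fin n ⊕ Fin m → ℝ))
    (hoPerp : oPerp = Submodule.span ℝ (Set.range fun j : Fin m => eInr n m j)) :
    (∀ t : ℝ, L t ⊓ oPerp = Submodule.span ℝ
      ((fun i : Fin n => eInr n m ⟨(i : ℕ), lt_of_lt_of_le i.isLt hnm⟩) ''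
        {i | Real.cos (t * x i) = 0})) ∧
    ((∑ i, (x i) ^ 2 = 1) →
      (∀ t : ℝ, 0 ≤ t →
        t < Real.pi / (2 * Finset.univ.sup' ⟨⟨0, hn⟩, Finset.mem_univ _⟩ fun i => |x i|) →
        L t ⊓ oPerp = ⊥) ∧
      Module.finrank ℝ
          ↥(L (Real.pi / (2 * Finset.univ.sup' ⟨⟨0, hn⟩, Finset.mem_univ _⟩ fun i => |x i|))
            ⊓ oPerp) =
        (Finset.univ.filter fun i =>
          |x i| = Finset.univ.sup' ⟨⟨0, hn⟩, Finset.mem_univ _⟩ fun i => |x i|).card) := by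
  subst hoPerp
  have main := fun t : ℝ => (congrArg
    (· ⊓ Submodule.span ℝ (Set.range fun j : Fin m => eInr n m j)) (hL t)).trans
      (span_inf_oPerp n m hnm x t)
  refine ⟨main, fun hx => ?_⟩
  set M := Finset.univ.sup' ⟨⟨0, hn⟩, Finset.mem_univ _⟩ fun i => |x i| with hMdef
  have hle : ∀ i, |x i| ≤ M := fun i =>
    Finset.le_sup' (fun i => |x i|) (Finset.mem_univ i)
  have hM : 0 < M := by
    obtain ⟨i, -, hi⟩ : ∃ i ∈ Finset.univ, (x i) ^ 2 ≠ 0 :=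
      Finset.exists_ne_zero_of_sum_ne_zero (by rw [hx]; exact one_ne_zero)
    exact (abs_pos.2 fun h => hi (by simp [h])).trans_le (hle i)
  refine ⟨fun t ht htM => ?_, ?_⟩
  · refine (main t).trans ?_
    have hempty : {i | Real.cos (t * x i) = 0} = ∅ :=
      Set.eq_empty_of_forall_notMem fun i hi => (cos_mul_pos hM (hle i) ht htM).ne' hi
    rw [hempty, Set.image_empty, Submodule.span_empty]
  · rw [main]
    have hset : {i | Real.cos (Real.pi / (2 * M) * x i) = 0} =
        ((Finset.univ.filter fun i => |x i| = M : Finset (Fin n)) : Set (Fin n)) := by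
      ext i
      simpa using cos_eq_zero_iff_abs_eq hM (hle i)
    rw [hset, Set.image_eq_range]
    have hli := (linearIndependent_eInr n m hnm).comp
      (Subtype.val : ((Finset.univ.filter fun i => |x i| = M : Finset (Fin n)) :
        Set (Fin n)) → Fin n) Subtype.val_injective
    exact (finrank_span_eq_card hli).trans (Fintype.card_coe _)
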